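/- The topological complexity of the configuration space of n ≥ 2 ordered distinct points in the plane ℝ² equals 2n − 2. -/

import Mathlib

/-- The space of continuous paths `[0,1] → X`, with the compact-open topology. -/
abbrev PathSpace (X : Type*) [TopologicalSpace X] := C(unitInterval, X)

/-- `U ⊆ X × X` admits a continuous section of the path fibration
`π : PX → X × X`, `π(γ) = (γ 0, γ 1)`. -/
def HasMotionPlanningSection (X : Type*) [TopologicalSpace X] (U : Set (X × X)) : Prop :=
  ∃ s : C(U, PathSpace X), ∀ p : U, s p 0 = (p : X × X).1 ∧ s p 1 = (p : X × X).2

/-- `X × X` can be covered by `k` open sets, over each of which the path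
fibration admits a continuous section. -/
def HasTCCover (X : Type*) [TopologicalSpace X] (k : ℕ) : Prop :=
  ∃ U : Fin k → Set (X × X), (∀ i, IsOpen (U i)) ∧ (⋃ i, U i) = Set.univ ∧
    ∀ i, HasMotionPlanningSection X (U i)

/-- The topological complexity of `X` (in the unnormalized convention of Farber,
so that `TopComplexity(point) = 1`), as an extended natural number. -/
noncomputable def TopComplexity (X : Type*) [TopologicalSpace X] : ℕ∞ :=
  sInf {N : ℕ∞ | ∃ k : ℕ, N = k ∧ HasTCCover X k}

/-- The configuration space of `n` ordered distinct points in `ℝ^m`. -/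
abbrev ConfSpace (n m : ℕ) := {f : Fin n → (Fin m → ℝ) // Function.Injective f}

/-!
Lower bound. Over a set with a continuous motion planner, the change of argument of a nowhere
vanishing function between the two endpoints has a continuous real-valued choice. If `k` such
changes of argument are the coordinates of a `k`-torus of pairs of endpoints, then `k` motion
planners do not suffice: they would yield a self-map of this torus which is homotopic to the
identity but misses a point. Such a map does not exist since its degree is one: the integral of
`det (1 + t • Db)` over a period of `b` is a polynomial in `t`, and for small `t` it is the volume
of the image of a fundamental domain under a bijection commuting with the lattice, so it is
constant. In the plane, planets on circular orbits around either of two suns provide a torus of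
dimension `2 * n - 3`.

Upper bound. A configuration is given by one of its edges, a nonzero complex number, and by its
shape after normalizing this edge to `1`. Shapes in the same cell for the lexicographic order of
the plane are connected by segments, and edges whose ratio lies in a fixed slit plane by
logarithms, which gives a motion planner near every stratum of pairs. A shape meets between `2`
and `n` vertical lines, fewer on the boundary of its cell, so a level between `0` and
`2 * n - 3` separates the strata.
-/

section DegreeOne

open MeasureTheory Set Topology Module

open scoped ContDiff

lemma bijective_add_of_contractingWith {E : Type*} [NormedAddCommGroup E] [CompleteSpace E]
    {K : NNReal} {g : E → E} (hg : ContractingWith K g) : Function.Bijective fun x => x + g x := by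
  refine (Function.bijective_iff_existsUnique _).2 fun y => ?_
  have hy : ContractingWith K fun x => y - g x :=
    ⟨hg.1, LipschitzWith.of_dist_le_mul fun x x' => by
      simpa only [dist_sub_left] using hg.2.dist_le_mul x x'⟩
  refine ⟨hy.fixedPoint, ?_, fun x hx => hy.fixedPoint_unique ?_⟩
  · exact eq_sub_iff_add_eq.1 hy.fixedPoint_isFixedPt.symm
  · exact (eq_sub_of_add_eq hx).symm

lemma eventually_forall_det_id_add_smul_pos {α E : Type*} [NormedAddCommGroup E] [NormedSpace ℝ E]
    {A : α → E →L[ℝ] E} {C : ℝ} (hA : ∀ x, ‖A x‖ ≤ C) :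
    ∀ᶠ t in 𝓝 (0 : ℝ), ∀ x, 0 < (ContinuousLinearMap.id ℝ E + t • A x).det := by
  have det_pos : ∀ᶠ B in 𝓝 (ContinuousLinearMap.id ℝ E), 0 < B.det :=
    ContinuousLinearMap.continuous_det.continuousAt.eventually_const_lt
      (by simp [ContinuousLinearMap.det])
  obtain ⟨r, hr, hdet⟩ := Metric.eventually_nhds_iff.1 det_pos
  have small : ∀ᶠ t in 𝓝 (0 : ℝ), ‖t‖ * C < r :=
    (by fun_prop : Continuous fun t : ℝ => ‖t‖ * C).continuousAt.eventually_lt_const (by simpa)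
  filter_upwards [small] with t ht x
  refine hdet ?_
  rw [dist_eq_norm, add_sub_cancel_left, norm_smul]
  exact (mul_le_mul_of_nonneg_left (hA x) (norm_nonneg t)).trans_lt ht

variable {ι E : Type*} [NormedAddCommGroup E] [NormedSpace ℝ E]

/-- Periodicity with respect to the lattice spanned by the basis `e`, that is, functions on the
torus `E ⧸ span ℤ (range e)`. -/
def LatticePeriodic {α : Type*} (e : Basis ι ℝ E) (f : E → α) : Prop :=
  ∀ v ∈ Submodule.span ℤ (range e), Function.Periodic f v

lemma latticePeriodic_basisFun_iff [Fintype ι] {α : Type*} {f : (ι → ℝ) → α} :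
    LatticePeriodic (Pi.basisFun ℝ ι) f ↔ ∀ k : ι → ℤ, Function.Periodic f fun i => (k i : ℝ) := by
  have mem_iff (v : ι → ℝ) :
      v ∈ Submodule.span ℤ (range (Pi.basisFun ℝ ι)) ↔ ∃ k : ι → ℤ, (fun i => (k i : ℝ)) = v := by
    simp [Basis.mem_span_iff_repr_mem, funext_iff, Classical.skolem]
  simp [LatticePeriodic, mem_iff]

namespace LatticePeriodic

variable {e : Basis ι ℝ E} {α F : Type*} {f : E → α}

lemma comp {β : Type*} (hf : LatticePeriodic e f) (g : α → β) :
    LatticePeriodic e (g ∘ f) :=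
  fun v hv => (hf v hv).comp g

lemma exists_mem_fundamentalDomain [Finite ι] (hf : LatticePeriodic e f) (x : E) :
    ∃ v, v + x ∈ ZSpan.fundamentalDomain e ∧ ∀ y, f (v + y) = f y := by
  obtain ⟨v, hv, -⟩ := ZSpan.exist_unique_vadd_mem_fundamentalDomain e x
  exact ⟨v, hv, fun y => by rw [add_comm, hf v v.2]⟩

lemma isCompact_closure_fundamentalDomain [Finite ι] (e : Basis ι ℝ E) :
    IsCompact (closure (ZSpan.fundamentalDomain e)) := by
  have := e.finiteDimensional_of_finite
  exact (ZSpan.fundamentalDomain_isBounded e).isCompact_closure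

lemma uniformContinuous [Finite ι] [UniformSpace α] (hp : LatticePeriodic e f)
    (hf : Continuous f) : UniformContinuous f := by
  intro r hr
  have h := (isCompact_closure_fundamentalDomain e).uniformContinuousAt_of_continuousAt f
    (fun a _ => hf.continuousAt) hr
  obtain ⟨ε, hε, hs⟩ := Metric.mem_uniformity_dist.1 h
  refine Metric.mem_uniformity_dist.2 ⟨ε, hε, fun {x y} hxy => ?_⟩
  obtain ⟨v, hvx, hv⟩ := hp.exists_mem_fundamentalDomain x
  simpa only [mem_preimage, hv] using
    hs (a := v + x) (b := v + y) (by simpa using hxy) (subset_closure hvx)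

lemma exists_norm_le [Finite ι] [SeminormedAddCommGroup F] {f : E → F} (hp : LatticePeriodic e f)
    (hf : Continuous f) : ∃ C, ∀ x, ‖f x‖ ≤ C := by
  obtain ⟨C, hC⟩ :=
    (isCompact_closure_fundamentalDomain e).exists_bound_of_continuousOn hf.continuousOn
  refine ⟨C, fun x => ?_⟩
  obtain ⟨v, hvx, hv⟩ := hp.exists_mem_fundamentalDomain x
  rw [← hv]
  exact hC _ (subset_closure hvx)

variable [NormedAddCommGroup F] [NormedSpace ℝ F]

lemma fderiv {f : E → F} (hp : LatticePeriodic e f) : LatticePeriodic e (fderiv ℝ f) := by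
  intro v hv x
  rw [← fderiv_comp_add_right, (hp v hv).funext]

lemma exists_contDiff_approx [Finite ι] [CompleteSpace F] {f : E → F} (hp : LatticePeriodic e f)
    (hf : Continuous f) {ε : ℝ} (hε : 0 < ε) :
    ∃ g : E → F, ContDiff ℝ ∞ g ∧ LatticePeriodic e g ∧ ∀ x, dist (g x) (f x) ≤ ε := by
  have := e.finiteDimensional_of_finite
  borelize E
  obtain ⟨δ, hδ, h⟩ := Metric.uniformContinuous_iff.1 (hp.uniformContinuous hf) ε hε
  let φ : ContDiffBump (0 : E) := ⟨δ / 2, δ, by positivity, by linarith⟩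
  let μ : Measure E := Measure.addHaar
  refine ⟨convolution (φ.normed μ) f (ContinuousLinearMap.lsmul ℝ ℝ) μ, ?_, fun v hv x => ?_,
    fun x => ?_⟩
  · exact φ.hasCompactSupport_normed.contDiff_convolution_left _ φ.contDiff_normed
      hf.locallyIntegrable
  · simp only [convolution, add_sub_right_comm, hp v hv _]
  · exact φ.dist_normed_convolution_le hf.aestronglyMeasurable fun y hy => (h hy).le

end LatticePeriodic

variable [MeasurableSpace E] [BorelSpace E] (e : Basis ι ℝ E) (μ : Measure E)
  [μ.IsAddHaarMeasure]

lemma measure_image_add_fundamentalDomain [Finite ι] {g : E → E} (hp : LatticePeriodic e g)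
    (hg : Continuous g) (hbij : Function.Bijective fun x => x + g x) :
    μ ((fun x => x + g x) '' ZSpan.fundamentalDomain e) = μ (ZSpan.fundamentalDomain e) := by
  have := e.finiteDimensional_of_finite
  have equivariant (v : Submodule.span ℤ (range e)) (x : E) :
      (v +ᵥ x) + g (v +ᵥ x) = v +ᵥ (x + g x) := by
    simp only [Submodule.vadd_def, vadd_eq_add]
    rw [add_comm (v : E) x, hp v v.2]
    abel
  have image_domain : IsAddFundamentalDomain (Submodule.span ℤ (range e))
      ((fun x => x + g x) '' ZSpan.fundamentalDomain e) μ := by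
    refine .mk' ?_ fun y => ?_
    · exact ((ZSpan.fundamentalDomain_measurableSet e).image_of_continuousOn_injOn
        (by fun_prop) hbij.1.injOn).nullMeasurableSet
    · obtain ⟨x, rfl⟩ := hbij.2 y
      simp only [← equivariant, hbij.1.mem_set_image]
      exact ZSpan.exist_unique_vadd_mem_fundamentalDomain e x
  have : VAddInvariantMeasure (Submodule.span ℤ (range e)) E μ :=
    ⟨fun v s _ => measure_preimage_add μ (v : E) s⟩
  exact image_domain.measure_eq (ZSpan.isAddFundamentalDomain e μ)

lemma setIntegral_abs_det_id_add_fderiv [Finite ι] {g : E → E} (hp : LatticePeriodic e g)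
    (hg : Differentiable ℝ g) (hbij : Function.Bijective fun x => x + g x) :
    ∫ x in ZSpan.fundamentalDomain e, |(ContinuousLinearMap.id ℝ E + fderiv ℝ g x).det| ∂μ =
      μ.real (ZSpan.fundamentalDomain e) := by
  have := e.finiteDimensional_of_finite
  have change_of_variables := integral_image_eq_integral_abs_det_fderiv_smul μ
    (ZSpan.fundamentalDomain_measurableSet e)
    (fun x _ => ((hasFDerivAt_id x).fun_add (hg x).hasFDerivAt).hasFDerivWithinAt) hbij.1.injOn
    (fun _ => (1 : ℝ))
  simpa [measureReal_def, measure_image_add_fundamentalDomain e μ hp hg.continuous hbij]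
    using change_of_variables.symm

lemma eventually_integral_det_id_add_smul_fderiv [Finite ι] {b : E → E}
    (hp : LatticePeriodic e b) (hb : ContDiff ℝ 1 b) :
    ∀ᶠ t in 𝓝 (0 : ℝ),
      ∫ x in ZSpan.fundamentalDomain e, (ContinuousLinearMap.id ℝ E + t • fderiv ℝ b x).det ∂μ =
        μ.real (ZSpan.fundamentalDomain e) := by
  have := e.finiteDimensional_of_finite
  have hdiff : Differentiable ℝ b := hb.differentiable one_ne_zero
  obtain ⟨C, hC⟩ := hp.fderiv.exists_norm_le (hb.continuous_fderiv one_ne_zero)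
  lift C to NNReal using (norm_nonneg _).trans (hC 0)
  have lipschitz : LipschitzWith C b := lipschitzWith_of_nnnorm_fderiv_le hdiff hC
  have contracting : ∀ᶠ t in 𝓝 (0 : ℝ), ‖t‖₊ * C < 1 :=
    (by fun_prop : Continuous fun t : ℝ => ‖t‖₊ * C).continuousAt.eventually_lt_const (by simp)
  filter_upwards [contracting, eventually_forall_det_id_add_smul_pos hC] with t ht hpos
  have deriv_smul (x : E) : fderiv ℝ (fun y => t • b y) x = t • fderiv ℝ b x :=
    fderiv_fun_const_smul (hdiff x) t
  have hbij := bijective_add_of_contractingWith ⟨ht, (lipschitzWith_smul t).comp lipschitz⟩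
  rw [← setIntegral_abs_det_id_add_fderiv e μ (hp.comp (t • ·)) (hdiff.const_smul t) hbij]
  simp only [Function.comp_def, deriv_smul, abs_of_pos (hpos _)]

lemma exists_polynomial_eval_eq_integral {X : Type*} [TopologicalSpace X] [MeasurableSpace X]
    {μ : Measure X} (Q : Polynomial C(X, ℝ)) (hQ : ∀ k, Integrable (Q.coeff k) μ) :
    ∃ p : Polynomial ℝ, ∀ t, p.eval t =
      ∫ x, (Q.map (ContinuousMap.evalAlgHom ℝ ℝ x : C(X, ℝ) →+* ℝ)).eval t ∂μ := by
  refine ⟨∑ k ∈ Q.support, Polynomial.monomial k (∫ x, Q.coeff k x ∂μ), fun t => ?_⟩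
  simp only [Polynomial.eval_map, Polynomial.eval₂_eq_sum, Polynomial.sum,
    RingHom.coe_coe, ContinuousMap.evalAlgHom_apply]
  rw [integral_finsetSum _ fun k _ => (hQ k).mul_const (t ^ k)]
  simp [Polynomial.eval_finsetSum, integral_mul_const]

lemma exists_polynomial_eval_eq_integral_det {X : Type*} [TopologicalSpace X] [T2Space X]
    [MeasurableSpace X] [OpensMeasurableSpace X] {μ : Measure X} [IsFiniteMeasureOnCompacts μ]
    {n : Type*} [Fintype n] [DecidableEq n] {M : X → Matrix n n ℝ} (hM : Continuous M) {s : Set X}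
    (hs : IsCompact (closure s)) :
    ∃ p : Polynomial ℝ, ∀ t : ℝ, p.eval t = ∫ x in s, (1 + t • M x).det ∂μ := by
  let A : Matrix n n C(X, ℝ) := .of fun i j => ⟨fun x => -M x i j, by fun_prop⟩
  obtain ⟨p, hp⟩ := exists_polynomial_eval_eq_integral (μ := μ.restrict s) A.charpolyRev
    fun k => ((A.charpolyRev.coeff k).continuous.continuousOn.integrableOn_compact hs).mono_set
      subset_closure
  refine ⟨p, fun t => (hp t).trans (integral_congr_ae (.of_forall fun x => ?_))⟩
  simp only [Matrix.charpolyRev, ← Polynomial.coe_mapRingHom, ← Polynomial.coe_evalRingHom,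
    RingHom.map_det]
  congr 1
  ext i j
  by_cases hij : i = j <;> simp [A, hij, mul_comm t]

/-- A `C¹` self-map of a torus homotopic to the identity has degree one. -/
theorem integral_det_id_add_fderiv [Finite ι] {b : E → E} (hp : LatticePeriodic e b)
    (hb : ContDiff ℝ 1 b) :
    ∫ x in ZSpan.fundamentalDomain e, (ContinuousLinearMap.id ℝ E + fderiv ℝ b x).det ∂μ =
      μ.real (ZSpan.fundamentalDomain e) := by
  classical
  have := Fintype.ofFinite ι
  have := e.finiteDimensional_of_finite
  have hfderiv : Continuous (fderiv ℝ b) := hb.continuous_fderiv one_ne_zero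
  let M (x : E) : Matrix ι ι ℝ := LinearMap.toMatrix e e (fderiv ℝ b x)
  have hM : Continuous M := continuous_matrix fun i j => by
    simp only [M, LinearMap.toMatrix_apply, ContinuousLinearMap.coe_coe]
    exact (e.coord i).continuous_of_finiteDimensional.comp (hfderiv.clm_apply continuous_const)
  have det_eq (t : ℝ) (x : E) :
      (ContinuousLinearMap.id ℝ E + t • fderiv ℝ b x).det = (1 + t • M x).det := by
    rw [ContinuousLinearMap.det, ← LinearMap.det_toMatrix e]
    simp [M]
  obtain ⟨p, hpoly⟩ := exists_polynomial_eval_eq_integral_det (μ := μ) hM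
    (LatticePeriodic.isCompact_closure_fundamentalDomain e)
  simp only [← det_eq] at hpoly
  have constant : p = Polynomial.C (μ.real (ZSpan.fundamentalDomain e)) := by
    refine Polynomial.eq_of_infinite_eval_eq _ _ (infinite_of_mem_nhds (0 : ℝ) ?_)
    filter_upwards [eventually_integral_det_id_add_smul_fderiv e μ hp hb] with t ht
    exact (hpoly t).trans (ht.trans Polynomial.eval_C.symm)
  simpa [constant] using (hpoly 1).symm

lemma exists_contDiff_deriv_eq_of_periodic {ρ : ℝ → ℝ} (hρ : Continuous ρ)
    (hp : Function.Periodic ρ 1) (h1 : ∫ x in (0 : ℝ)..1, ρ x = 1) :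
    ∃ η : ℝ → ℝ, ContDiff ℝ 1 η ∧ deriv η = ρ ∧ ∀ (x : ℝ) (k : ℤ), η (x + k) = η x + k := by
  have hd (x : ℝ) : HasDerivAt (fun u => ∫ t in (0 : ℝ)..u, ρ t) (ρ x) x :=
    hρ.integral_hasStrictDerivAt 0 x |>.hasDerivAt
  have deriv_eq : deriv (fun u => ∫ t in (0 : ℝ)..u, ρ t) = ρ := funext fun x => (hd x).deriv
  refine ⟨_, contDiff_one_iff_deriv.2 ⟨fun x => (hd x).differentiableAt, ?_⟩, deriv_eq,
    fun x k => ?_⟩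
  · rwa [deriv_eq]
  · have one_period : ∫ t in x..x + (1 : ℝ), ρ t = 1 := by
      rw [hp.intervalIntegral_add_eq x 0, zero_add, h1]
    have periods := hp.intervalIntegral_add_zsmul_eq k x hρ.intervalIntegrable
    simp only [one_period, zsmul_one] at periods
    rw [← intervalIntegral.integral_add_adjacent_intervals (hρ.intervalIntegrable 0 x)
      (hρ.intervalIntegrable x _), periods]

lemma exists_contDiff_deriv_eq_zero_near_int :
    ∃ η : ℝ → ℝ, ContDiff ℝ 1 η ∧ (∀ (x : ℝ) (k : ℤ), η (x + k) = η x + k) ∧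
      ∀ (x : ℝ) (k : ℤ), |x - k| ≤ 1 / 8 → deriv η x = 0 := by
  let ρ (x : ℝ) : ℝ := max 0 (-Real.cos (2 * Real.pi * x))
  have hρ : Continuous ρ := by fun_prop
  have hp : Function.Periodic ρ 1 := fun x => by
    simp only [ρ, mul_add, mul_one, Real.cos_add_two_pi]
  have integral_pos : 0 < ∫ x in (0 : ℝ)..1, ρ x :=
    intervalIntegral.integral_pos one_pos hρ.continuousOn (fun x _ => le_max_left _ _)
      ⟨1 / 2, by norm_num, lt_max_of_lt_right (by ring_nf; simp)⟩
  obtain ⟨η, hη, deriv_eq, hη_add⟩ := exists_contDiff_deriv_eq_of_periodic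
    (ρ := fun x => (∫ x in (0 : ℝ)..1, ρ x)⁻¹ * ρ x) (by fun_prop)
    (fun x => by simp only [hp x])
    (by rw [intervalIntegral.integral_const_mul, inv_mul_cancel₀ integral_pos.ne'])
  refine ⟨η, hη, hη_add, fun x k hx => ?_⟩
  obtain ⟨hl, hr⟩ := abs_le.1 hx
  have cos_nonneg : 0 ≤ Real.cos (2 * Real.pi * x) := by
    rw [← Real.cos_sub_int_mul_two_pi _ k]
    exact Real.cos_nonneg_of_mem_Icc ⟨by nlinarith [Real.pi_pos], by nlinarith [Real.pi_pos]⟩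
  simp [deriv_eq, ρ, max_eq_left (neg_nonpos.2 cos_nonneg)]

lemma det_fderiv_eq_zero_of_fderiv_apply_eq_zero [Finite ι] {G : (ι → ℝ) → ι → ℝ} {x : ι → ℝ}
    (hG : DifferentiableAt ℝ G x) {i : ι} (hi : fderiv ℝ (fun y => G y i) x = 0) :
    (fderiv ℝ G x).det = 0 := by
  classical
  have := Fintype.ofFinite ι
  rw [ContinuousLinearMap.det, ← LinearMap.det_toMatrix']
  refine Matrix.det_eq_zero_of_row_eq_zero i fun j => ?_
  simpa [LinearMap.toMatrix'_apply, fderiv_apply hG] using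
    DFunLike.congr_fun hi (Pi.single j 1)

/-- Otherwise, the degree one map obtained by collapsing a neighbourhood of the integers in each
coordinate of `x ↦ x + b x` would have vanishing Jacobian everywhere. -/
theorem exists_forall_add_ne_intCast [Fintype ι] {b : (ι → ℝ) → ι → ℝ} (hb : Continuous b)
    (hp : LatticePeriodic (Pi.basisFun ℝ ι) b) : ∃ x, ∀ i, ∀ k : ℤ, x i + b x i ≠ k := by
  by_contra! near_int
  obtain ⟨c, hc, hcp, hcb⟩ := hp.exists_contDiff_approx hb (show (0 : ℝ) < 1 / 8 by norm_num)
  obtain ⟨η, hη, hη_add, hη_deriv⟩ := exists_contDiff_deriv_eq_zero_near_int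
  let G (x : ι → ℝ) (i : ι) : ℝ := η (x i + c x i)
  have hcoord (i : ι) : ContDiff ℝ 1 fun x : ι → ℝ => x i + c x i :=
    (contDiff_apply ℝ ℝ i).add ((contDiff_pi.1 hc i).of_le (by norm_cast))
  have hG : ContDiff ℝ 1 G := contDiff_pi.2 fun i => hη.comp (hcoord i)
  have hGp : LatticePeriodic (Pi.basisFun ℝ ι) fun x => G x - x := by
    refine latticePeriodic_basisFun_iff.2 fun k x => funext fun i => ?_
    simp only [G, latticePeriodic_basisFun_iff.1 hcp k x, Pi.sub_apply, Pi.add_apply,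
      add_right_comm _ (k i : ℝ), hη_add, add_sub_add_right_eq_sub]
  have det_eq_zero (x : ι → ℝ) :
      (ContinuousLinearMap.id ℝ (ι → ℝ) + fderiv ℝ (fun x => G x - x) x).det = 0 := by
    have hGx : DifferentiableAt ℝ G x := hG.differentiable one_ne_zero x
    rw [fderiv_fun_sub hGx differentiableAt_fun_id, fderiv_fun_id, add_sub_cancel]
    obtain ⟨i, k, hik⟩ := near_int x
    refine det_fderiv_eq_zero_of_fderiv_apply_eq_zero hGx (i := i) ?_
    have deriv_zero : deriv η (x i + c x i) = 0 := by
      refine hη_deriv _ k ?_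
      rw [← hik, add_sub_add_left_eq_sub, ← Real.dist_eq]
      exact (dist_le_pi_dist _ _ i).trans (hcb x)
    have hchain := (hη.differentiable one_ne_zero _).hasDerivAt.comp_hasFDerivAt x
      ((hcoord i).differentiable one_ne_zero x).hasFDerivAt
    rw [deriv_zero, zero_smul] at hchain
    exact hchain.fderiv
  have degree_one := integral_det_id_add_fderiv (Pi.basisFun ℝ ι) volume hGp (hG.sub contDiff_id)
  simp only [det_eq_zero, integral_zero] at degree_one
  exact ENNReal.toReal_ne_zero.2 ⟨ZSpan.measure_fundamentalDomain_ne_zero _,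
    (ZSpan.fundamentalDomain_isBounded _).measure_lt_top.ne⟩ degree_one.symm

end DegreeOne

section Torus

open Set

variable {ι : Type*} [Finite ι]

theorem exists_forall_mul_circleExp_ne_one (b : C(ι → Circle, ι → ℝ)) :
    ∃ z, ∀ i, z i * Circle.exp (b z i) ≠ 1 := by
  have := Fintype.ofFinite ι
  let toTorus (x : ι → ℝ) (i : ι) : Circle := Circle.exp (x i * (2 * Real.pi))
  have toTorus_periodic (k : ι → ℤ) : Function.Periodic toTorus fun i => (k i : ℝ) := fun x =>
    funext fun i => Circle.exp_eq_exp.2 ⟨k i, add_mul _ _ _⟩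
  obtain ⟨x, hx⟩ := exists_forall_add_ne_intCast (b := fun x i => b (toTorus x) i / (2 * Real.pi))
    (by fun_prop) (latticePeriodic_basisFun_iff.2 fun k x => by simp only [toTorus_periodic k x])
  refine ⟨toTorus x, fun i hi => ?_⟩
  rw [← Circle.exp_add, ← Circle.exp_zero, Circle.exp_eq_exp] at hi
  obtain ⟨k, hk⟩ := hi
  refine hx i k ?_
  field_simp
  linarith

/-- A Lusternik–Schnirelmann bound: the argument `θ i` shows that the class of the `i`-th coordinate
in `H¹` vanishes on `W i`, whereas the cup product of these classes is not zero. -/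
theorem iUnion_ne_univ_of_circleExp_eq {W : ι → Set (ι → Circle)} (hW : ∀ i, IsOpen (W i))
    (θ : ∀ i, C(W i, ℝ)) (hθ : ∀ i (z : W i), Circle.exp (θ i z) = z.1 i) : ⋃ i, W i ≠ univ := by
  intro hcover
  obtain ⟨V, hV, hVcl, hVW⟩ := exists_iUnion_eq_closed_subset hW (fun _ => toFinite _) hcover
  have extend (i : ι) : ∃ Θ : C(ι → Circle, ℝ), ∀ z ∈ V i, Circle.exp (Θ z) = z i := by
    obtain ⟨Θ, hΘ⟩ := ContinuousMap.exists_restrict_eq (hVcl i)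
      ((θ i).comp (ContinuousMap.inclusion (hVW i)))
    refine ⟨Θ, fun z hz => ?_⟩
    exact (congrArg _ (DFunLike.congr_fun hΘ ⟨z, hz⟩)).trans (hθ i ⟨z, hVW i hz⟩)
  choose Θ hΘ using extend
  obtain ⟨z, hz⟩ := exists_forall_mul_circleExp_ne_one ⟨fun z i => -Θ i z, by fun_prop⟩
  obtain ⟨i, hi⟩ := iUnion_eq_univ_iff.1 hV z
  exact hz i (by simp [Circle.exp_neg, hΘ i z hi])

end Torus

section MotionPlanning

open Set Complex

variable {X Y : Type*} [TopologicalSpace X] [TopologicalSpace Y]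

lemma circleExp_im_eq_of_cexp_eq {w : ℂ} {z : Circle} (h : exp w = z) : Circle.exp w.im = z := by
  have hre : w.re = 0 := by
    simpa [norm_exp, Circle.norm_coe] using congrArg norm h
  refine Circle.ext ?_
  rw [Circle.coe_exp, ← h]
  conv_rhs => rw [← re_add_im w, hre, ofReal_zero, zero_add]

lemma hasMotionPlanningSection_empty : HasMotionPlanningSection X ∅ :=
  ⟨⟨fun p => p.2.elim, continuous_of_const fun p => p.2.elim⟩, fun p => p.2.elim⟩

lemma HasMotionPlanningSection.exists_log {U : Set (X × X)} (hU : HasMotionPlanningSection X U)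
    (f : C(X, {z : ℂ // z ≠ 0})) :
    ∃ A : C(U, ℂ), ∀ p : U, (f p.1.2 : ℂ) = exp (A p) * f p.1.1 := by
  obtain ⟨s, hs⟩ := hU
  let H : C(unitInterval × U, {z : ℂ // z ≠ 0}) :=
    ⟨fun q => ⟨f (s q.2 q.1) / f q.2.1.1, div_ne_zero (f _).2 (f _).2⟩,
      (Continuous.div (by fun_prop) (by fun_prop) fun q => (f _).2).subtype_mk _⟩
  have H0 (p : U) : H (0, p) = ⟨exp (ContinuousMap.const U (0 : ℂ) p), exp_ne_zero _⟩ := by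
    ext
    simp [H, (hs p).1, div_self (f p.1.1).2]
  let A := isCoveringMap_exp.liftHomotopy H (ContinuousMap.const U 0) H0
  refine ⟨⟨fun p => A (1, p), by fun_prop⟩, fun p => ?_⟩
  have lifts : exp (A (1, p)) = f (s p 1) / f p.1.1 := congrArg Subtype.val
    (congrFun (isCoveringMap_exp.liftHomotopy_lifts H (ContinuousMap.const U 0) H0) (1, p))
  rw [(hs p).2, eq_div_iff (f _).2] at lifts
  exact lifts.symm

/-- A torus in `X × X` on which the change of argument of `f i` between the two endpoints is
homotopic to the `i`-th coordinate obstructs motion planning. -/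
theorem not_hasTCCover_of_torus {ι : Type*} [Fintype ι] (f : ι → C(X, {z : ℂ // z ≠ 0}))
    (F : C(ι → Circle, X × X))
    (h : ∀ i z, (f i (F z).2 : ℂ) / (z i * f i (F z).1) ∈ slitPlane) :
    ¬ HasTCCover X (Fintype.card ι) := by
  rintro ⟨U, hU, hcover, hsec⟩
  let ε := Fintype.equivFin ι
  choose A hA using fun i => (hsec (ε i)).exists_log (f i)
  have log_continuous (i : ι) : Continuous fun z : ι → Circle =>
      log (f i (F z).2 / (z i * f i (F z).1)) := by
    refine Continuous.clog (Continuous.div (by fun_prop) (by fun_prop) fun z => ?_) (h i)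
    exact mul_ne_zero (z i).coe_ne_zero (f i _).2
  let θ (i : ι) : C(F ⁻¹' U (ε i), ℝ) :=
    ⟨fun z => (A i ⟨F z, z.2⟩ - log (f i (F z).2 / (z.1 i * f i (F z).1))).im,
      continuous_im.comp (.sub (by fun_prop) ((log_continuous i).comp continuous_subtype_val))⟩
  refine iUnion_ne_univ_of_circleExp_eq (fun i => (hU (ε i)).preimage F.continuous) θ
    (fun i z => ?_) ?_
  · refine circleExp_im_eq_of_cexp_eq (w := A i ⟨F z, z.2⟩ - log _) ?_
    have := (f i (F z).1).2
    rw [exp_sub, exp_log (slitPlane_ne_zero (h i z)), hA i ⟨F z, z.2⟩]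
    field_simp
  · rw [← preimage_iUnion, ε.surjective.iUnion_comp, hcover, preimage_univ]

lemma HasTCCover.mono {k l : ℕ} (hkl : k ≤ l) (h : HasTCCover X k) : HasTCCover X l := by
  obtain ⟨U, hU, hcover, hsec⟩ := h
  let U' (i : Fin l) : Set (X × X) := if hi : i < k then U ⟨i, hi⟩ else ∅
  refine ⟨U', fun i => ?_, ?_, fun i => ?_⟩
  · by_cases hi : i < k <;> simp [U', hi, hU]
  · refine eq_univ_of_univ_subset (hcover ▸ iUnion_subset fun i => ?_)
    exact subset_iUnion_of_subset (i.castLE hkl) (by simp [U'])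
  · by_cases hi : i < k <;> simp [U', hi, hsec, hasMotionPlanningSection_empty]

lemma topComplexity_eq_of_hasTCCover_of_not {k : ℕ} (h : HasTCCover X (k + 1))
    (h' : ¬ HasTCCover X k) : TopComplexity X = (k + 1 : ℕ) := by
  refine le_antisymm (sInf_le ⟨_, rfl, h⟩) (le_sInf ?_)
  rintro _ ⟨l, rfl, hl⟩
  by_contra! hlk
  exact h' (hl.mono (Nat.lt_succ_iff.1 (by exact_mod_cast hlk)))

lemma HasTCCover.of_homeomorph (φ : X ≃ₜ Y) {k : ℕ} (h : HasTCCover X k) : HasTCCover Y k := by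
  obtain ⟨U, hU, hcover, hsec⟩ := h
  let Φ : C(Y × Y, X × X) := ⟨Prod.map φ.symm φ.symm, by fun_prop⟩
  refine ⟨fun i => Φ ⁻¹' U i, fun i => (hU i).preimage Φ.continuous,
    by rw [← preimage_iUnion, hcover, preimage_univ], fun i => ?_⟩
  obtain ⟨s, hs⟩ := hsec i
  refine ⟨⟨fun p => (φ : C(X, Y)).comp (s ⟨Φ p, p.2⟩), by fun_prop⟩, fun p => ?_⟩
  obtain ⟨hs0, hs1⟩ := hs ⟨Φ p, p.2⟩
  exact ⟨(congrArg φ hs0).trans (φ.apply_symm_apply _),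
    (congrArg φ hs1).trans (φ.apply_symm_apply _)⟩

lemma topComplexity_congr (φ : X ≃ₜ Y) : TopComplexity X = TopComplexity Y := by
  have (k : ℕ) : HasTCCover X k ↔ HasTCCover Y k := ⟨.of_homeomorph φ, .of_homeomorph φ.symm⟩
  simp only [TopComplexity, this]

end MotionPlanning

/-- Ordered configurations in `M` of distinct points labelled by `ι`. -/
abbrev Conf (ι M : Type*) := {f : ι → M // Function.Injective f}

namespace Conf

variable {ι κ M N : Type*} [TopologicalSpace M] [TopologicalSpace N]

@[fun_prop]
lemma continuous_apply (i : ι) : Continuous fun x : Conf ι M => x.1 i :=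
  (_root_.continuous_apply i).comp continuous_subtype_val

/-- Relabelling the points of a configuration and transporting them to another space. -/
def congr (σ : ι ≃ κ) (φ : M ≃ₜ N) : Conf ι M ≃ₜ Conf κ N :=
  (Homeomorph.piCongr σ fun _ => φ).subtype fun f => by
    have : Homeomorph.piCongr σ (fun _ => φ) f = φ ∘ f ∘ σ.symm := by
      ext k
      obtain ⟨i, rfl⟩ := σ.surjective k
      simp [Homeomorph.piCongr]
    rw [this, φ.injective.of_comp_iff, Function.Injective.of_comp_iff' f σ.symm.bijective]

/-- The vector from the `i`-th to the `j`-th point. -/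
def edge [AddGroup M] [ContinuousSub M] {i j : ι} (hij : i ≠ j) :
    C(Conf ι M, {v : M // v ≠ 0}) where
  toFun x := ⟨x.1 j - x.1 i, sub_ne_zero.2 (x.2.ne hij.symm)⟩
  continuous_toFun := by fun_prop

/-- The configurations in which the `i`-th point moves on the circle of radius `|r i|` around `0`,
diametrically opposed to its angle when `r i < 0`. -/
noncomputable def circles (r : ι → ℝ) (hr : Function.Injective fun i => |r i|) :
    C(ι → Circle, Conf ι ℂ) where
  toFun z := ⟨fun i => r i * z i, fun i j h => hr (by
    simpa [Circle.norm_coe] using congrArg norm h)⟩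
  continuous_toFun := by fun_prop

end Conf

section TwoSuns

open Complex Function

variable (N : ℕ)

/-- The radii of the orbits in a planetary system with `N` planets and two suns labelled by `Bool`,
the sun `c` being at the centre and the other one on the outermost orbit. -/
def orbitRadius (c : Bool) : Bool ⊕ Fin N → ℕ :=
  Sum.elim (fun a => if a = c then 0 else N + 1) fun b => b + 1

lemma orbitRadius_injective (c : Bool) : Injective (orbitRadius N c) :=
  .sumElim (by cases c <;> simp [Bool.injective_iff])
    ((add_left_injective 1).comp Fin.val_injective) fun a b => by grind

/-- A torus of dimension `2 * N + 1` of pairs of configurations. In the first one, the planets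
move around the sun `true`. In the second one, the planets and the sun `true` move around the sun
`false`. -/
noncomputable def twoSunsTorus :
    C(Option (Bool × Fin N) → Circle, Conf (Bool ⊕ Fin N) ℂ × Conf (Bool ⊕ Fin N) ℂ) where
  toFun z := (
    Conf.circles (fun p => orbitRadius N true p) (by
      simpa [Function.comp_def] using Nat.cast_injective.comp (orbitRadius_injective N true))
      (Sum.elim 1 fun b => z none / z (some (true, b))),
    Conf.circles (fun p => -orbitRadius N false p) (by
      simpa [Function.comp_def] using Nat.cast_injective.comp (orbitRadius_injective N false))
      (Sum.elim (fun _ => z none) fun b => z (some (false, b))))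
  continuous_toFun := by
    refine .prodMk ((Conf.circles _ _).continuous.comp (continuous_pi ?_))
      ((Conf.circles _ _).continuous.comp (continuous_pi ?_)) <;>
    · rintro (a | b) <;> simp only [Sum.elim_inl, Sum.elim_inr, Pi.one_apply] <;> fun_prop

/-- The edges whose directions detect the coordinates of `twoSunsTorus`. -/
noncomputable def twoSunsEdge : Option (Bool × Fin N) → C(Conf (Bool ⊕ Fin N) ℂ, {v : ℂ // v ≠ 0})
  | none => Conf.edge (i := .inl true) (j := .inl false) (by simp)
  | some (a, b) => Conf.edge (i := .inl a) (j := .inr b) Sum.inl_ne_inr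

variable {N} (z : Option (Bool × Fin N) → Circle) (b : Fin N)

lemma twoSunsEdge_none_div :
    (twoSunsEdge N none (twoSunsTorus N z).2 : ℂ) /
      (z none * twoSunsEdge N none (twoSunsTorus N z).1) = 1 := by
  have fst : (twoSunsEdge N none (twoSunsTorus N z).1 : ℂ) = N + 1 := by
    simp [twoSunsEdge, twoSunsTorus, Conf.edge, Conf.circles, orbitRadius]
  have snd : (twoSunsEdge N none (twoSunsTorus N z).2 : ℂ) = z none * (N + 1) := by
    simp [twoSunsEdge, twoSunsTorus, Conf.edge, Conf.circles, orbitRadius, mul_comm]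
  rw [fst, snd, div_self (mul_ne_zero (z none).coe_ne_zero N.cast_add_one_ne_zero)]

lemma twoSunsEdge_false_div :
    (twoSunsEdge N (some (false, b)) (twoSunsTorus N z).2 : ℂ) /
      (z (some (false, b)) * twoSunsEdge N (some (false, b)) (twoSunsTorus N z).1) =
        (b + 1 : ℝ) / ((N + 1 : ℝ) - (b + 1 : ℝ) * (z none / z (some (true, b)) : Circle)) := by
  have fst : (twoSunsEdge N (some (false, b)) (twoSunsTorus N z).1 : ℂ) =
      -((N + 1 : ℝ) - (b + 1 : ℝ) * (z none / z (some (true, b)) : Circle)) := by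
    simp [twoSunsEdge, twoSunsTorus, Conf.edge, Conf.circles, orbitRadius]
  have snd : (twoSunsEdge N (some (false, b)) (twoSunsTorus N z).2 : ℂ) =
      z (some (false, b)) * -(b + 1 : ℝ) := by
    simp [twoSunsEdge, twoSunsTorus, Conf.edge, Conf.circles, orbitRadius, mul_comm,
      -neg_add_rev]
  rw [fst, snd, mul_div_mul_left _ _ (Circle.coe_ne_zero _), neg_div_neg_eq]

lemma twoSunsEdge_true_div :
    (twoSunsEdge N (some (true, b)) (twoSunsTorus N z).2 : ℂ) /
      (z (some (true, b)) * twoSunsEdge N (some (true, b)) (twoSunsTorus N z).1) =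
        ((N + 1 : ℝ) - (b + 1 : ℝ) * (z (some (false, b)) / z none : Circle)) / (b + 1 : ℝ) := by
  have hz := (z none).coe_ne_zero
  have fst : z (some (true, b)) * (twoSunsEdge N (some (true, b)) (twoSunsTorus N z).1 : ℂ) =
      z none * (b + 1 : ℝ) := by
    simp [twoSunsEdge, twoSunsTorus, Conf.edge, Conf.circles, orbitRadius, mul_div_cancel₀,
      mul_left_comm, mul_comm]
  have snd : (twoSunsEdge N (some (true, b)) (twoSunsTorus N z).2 : ℂ) =
      z none * ((N + 1 : ℝ) - (b + 1 : ℝ) * (z (some (false, b)) / z none : Circle)) := by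
    simp only [twoSunsEdge, Conf.edge, twoSunsTorus, Conf.circles, orbitRadius,
      ContinuousMap.coe_mk, Sum.elim_inl, Sum.elim_inr, Bool.true_eq_false, ↓reduceIte,
      Circle.coe_div]
    push_cast
    field_simp
    ring
  rw [fst, snd, mul_div_mul_left _ _ hz]

lemma re_sub_mul_circle_pos {r R : ℝ} (hr : 0 ≤ r) (h : r < R) (u : Circle) :
    0 < (R - r * u : ℂ).re := by
  have re_le : (u : ℂ).re ≤ 1 := (re_le_norm _).trans_eq u.norm_coe
  rw [sub_re, re_ofReal_mul, ofReal_re]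
  nlinarith

theorem not_hasTCCover_conf_complex :
    ¬ HasTCCover (Conf (Bool ⊕ Fin N) ℂ) (2 * N + 1) := by
  have card_eq : Fintype.card (Option (Bool × Fin N)) = 2 * N + 1 := by simp
  have re_pos (b : Fin N) (u : Circle) : 0 < ((N + 1 : ℝ) - (b + 1 : ℝ) * u : ℂ).re :=
    re_sub_mul_circle_pos (by positivity) (by simp) u
  rw [← card_eq]
  refine not_hasTCCover_of_torus (twoSunsEdge N) (twoSunsTorus N) fun i z => .inl ?_
  rcases i with _ | ⟨_ | _, b⟩
  · rw [twoSunsEdge_none_div]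
    exact one_pos
  · have h := re_pos b (z none / z (some (true, b)))
    rw [twoSunsEdge_false_div, div_eq_mul_inv, re_ofReal_mul, inv_re]
    exact mul_pos (by positivity) (div_pos h (normSq_pos.2 (ne_of_apply_ne re h.ne')))
  · rw [twoSunsEdge_true_div, div_ofReal_re]
    exact div_pos (re_pos b _) (by positivity)

end TwoSuns

section Stratification

open Set Topology

lemma exists_pairwise_disjoint_isOpen_of_disjoint_closure {X ι : Type*} [TopologicalSpace X]
    [CompletelyNormalSpace X] [Finite ι] {E : ι → Set X}
    (hE : Pairwise fun i j => Disjoint (closure (E i)) (E j)) :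
    ∃ O : ι → Set X, (∀ i, IsOpen (O i)) ∧ (∀ i, E i ⊆ O i) ∧
      Pairwise (Function.onFun Disjoint O) := by
  have disjoint_nhdsSet : Pairwise (Function.onFun Disjoint fun i => 𝓝ˢ (E i)) := fun i j hij =>
    (completely_normal (hE hij.symm) (hE hij).symm).symm
  obtain ⟨S, hS, hdisj⟩ := disjoint_nhdsSet.exists_mem_filter_of_disjoint
  exact ⟨fun i => interior (S i), fun i => isOpen_interior,
    fun i => subset_interior_iff_mem_nhdsSet.2 (hS i),
    fun i j hij => (hdisj hij).mono interior_subset interior_subset⟩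

variable {X : Type*} [TopologicalSpace X]

lemma HasMotionPlanningSection.mono {U V : Set (X × X)} (hV : HasMotionPlanningSection X V)
    (h : U ⊆ V) : HasMotionPlanningSection X U := by
  obtain ⟨s, hs⟩ := hV
  exact ⟨s.comp (.inclusion h), fun p => hs _⟩

lemma HasMotionPlanningSection.of_homotopic {U : Set (X × X)}
    (h : (ContinuousMap.fst.restrict U).Homotopic (ContinuousMap.snd.restrict U)) :
    HasMotionPlanningSection X U := by
  obtain ⟨H⟩ := h
  exact ⟨(H.toContinuousMap.comp .prodSwap).curry, fun p => ⟨H.apply_zero p, H.apply_one p⟩⟩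

lemma HasMotionPlanningSection.iUnion {ι : Type*} {O : ι → Set (X × X)} (hO : ∀ i, IsOpen (O i))
    (hdisj : Pairwise (Function.onFun Disjoint O)) (hs : ∀ i, HasMotionPlanningSection X (O i)) :
    HasMotionPlanningSection X (⋃ i, O i) := by
  choose s hs using hs
  let S (i : ι) : Set (⋃ i, O i : Set (X × X)) := Subtype.val ⁻¹' O i
  let φ (i : ι) : C(S i, PathSpace X) := (s i).comp ⟨fun p => ⟨p.1.1, p.2⟩, by fun_prop⟩
  have mem_S (p) : ∃ i, p ∈ S i := by
    obtain ⟨i, hi⟩ := mem_iUnion.1 p.2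
    exact ⟨i, hi⟩
  have agree (i j p) (hi : p ∈ S i) (hj : p ∈ S j) : φ i ⟨p, hi⟩ = φ j ⟨p, hj⟩ := by
    obtain rfl := hdisj.eq (not_disjoint_iff.2 ⟨_, hi, hj⟩)
    rfl
  have mem_nhds (p) : ∃ i, S i ∈ 𝓝 p := (mem_S p).imp fun i hi =>
    ((hO i).preimage continuous_subtype_val).mem_nhds hi
  refine ⟨ContinuousMap.liftCover S φ agree mem_nhds, fun p => ?_⟩
  obtain ⟨i, hi⟩ := mem_S p
  rw [ContinuousMap.liftCover_coe (⟨p, hi⟩ : S i)]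
  exact hs i _

theorem hasTCCover_of_stratification [CompletelyNormalSpace (X × X)] {T : Type*} [Finite T]
    {k : ℕ} (τ : X × X → T) (ℓ : X × X → Fin k)
    (hτ : ∀ p q, q ∈ closure (τ ⁻¹' {τ p}) → ℓ q = ℓ p → τ q = τ p)
    (hs : ∀ p, ∃ V, IsOpen V ∧ τ ⁻¹' {τ p} ⊆ V ∧ HasMotionPlanningSection X V) :
    HasTCCover X k := by
  have nhd (t : T) : ∃ V, IsOpen V ∧ τ ⁻¹' {t} ⊆ V ∧ HasMotionPlanningSection X V := by
    rcases (τ ⁻¹' {t}).eq_empty_or_nonempty with ht | ⟨p, rfl⟩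
    · exact ⟨∅, isOpen_empty, ht.subset, hasMotionPlanningSection_empty⟩
    · exact hs p
  choose V hV hτV hs using nhd
  let E (i : Fin k) (t : T) : Set (X × X) := ℓ ⁻¹' {i} ∩ τ ⁻¹' {t}
  have separated (i : Fin k) : Pairwise fun t t' => Disjoint (closure (E i t)) (E i t') := by
    intro t t' htt'
    rw [disjoint_left]
    rintro q hq ⟨rfl, rfl⟩
    obtain ⟨p, hp, rfl⟩ := closure_nonempty_iff.1 ⟨q, hq⟩
    exact htt' (hτ p q (closure_mono inter_subset_right hq) hp.symm).symm
  choose O hO hEO hdisj using fun i =>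
    exists_pairwise_disjoint_isOpen_of_disjoint_closure (separated i)
  have isOpen_inter (i t) : IsOpen (O i t ∩ V t) := (hO i t).inter (hV t)
  refine ⟨fun i => ⋃ t, O i t ∩ V t, fun i => isOpen_iUnion (isOpen_inter i),
    eq_univ_of_forall fun p => ?_,
    fun i => .iUnion (isOpen_inter i) ?_ fun t => (hs t).mono inter_subset_right⟩
  · exact mem_iUnion₂.2 ⟨ℓ p, τ p, hEO _ _ ⟨rfl, rfl⟩, hτV _ rfl⟩
  · exact fun t t' htt' => (hdisj i htt').mono inter_subset_left inter_subset_left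

end Stratification

section Cells

open Set Topology Complex

variable {ι : Type*}

/-- The cell of `y` in the decomposition of `ι → ℂ` by the lexicographic order of the plane: it
records which points lie weakly to the left of which ones, and which lie weakly below which ones on
the same vertical line. -/
def cellType (y : ι → ℂ) (i j : ι) : Prop × Prop :=
  ((y i).re ≤ (y j).re, (y i).re = (y j).re → (y i).im ≤ (y j).im)

/-- The weak inequalities valid on the cell of `w` hold for `x`, as they do if `x` lies in the
closure of this cell. -/
def Degenerates (w x : ι → ℂ) : Prop :=
  ∀ i j, ((w i).re ≤ (w j).re → (x i).re ≤ (x j).re) ∧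
    ((w i).re = (w j).re → (w i).im ≤ (w j).im → (x i).im ≤ (x j).im)

lemma cellType_eq_iff {y w : ι → ℂ} :
    cellType y = cellType w ↔ ∀ i j, ((y i).re ≤ (y j).re ↔ (w i).re ≤ (w j).re) ∧
      (((y i).re = (y j).re → (y i).im ≤ (y j).im) ↔
        ((w i).re = (w j).re → (w i).im ≤ (w j).im)) := by
  simp only [funext_iff, cellType, Prod.mk.injEq, eq_iff_iff]

lemma re_eq_re_iff_of_cellType_eq {y w : ι → ℂ} (h : cellType y = cellType w) (i j : ι) :
    (y i).re = (y j).re ↔ (w i).re = (w j).re := by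
  have h := cellType_eq_iff.1 h
  rw [le_antisymm_iff, le_antisymm_iff, (h i j).1, (h j i).1]

lemma eq_zero_of_lineMap_eq_zero {a b t : ℝ} (ht : t ∈ Icc 0 1) (nonpos : a ≤ 0 ↔ b ≤ 0)
    (nonneg : 0 ≤ a ↔ 0 ≤ b) (h : AffineMap.lineMap a b t = 0) : a = 0 := by
  rw [AffineMap.lineMap_apply_ring] at h
  rcases ht.1.eq_or_lt with rfl | t_pos
  · simpa using h
  have h1 := sub_nonneg.2 ht.2
  rcases lt_trichotomy a 0 with ha | ha | ha
  · have hb : b < 0 := not_le.1 fun hb => ha.not_ge (nonneg.2 hb)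
    linarith [mul_nonpos_of_nonneg_of_nonpos h1 ha.le, mul_neg_of_pos_of_neg t_pos hb]
  · exact ha
  · have hb : 0 < b := not_le.1 fun hb => ha.not_ge (nonpos.2 hb)
    linarith [mul_nonneg h1 ha.le, mul_pos t_pos hb]

lemma injective_lineMap_of_cellType_eq {y w : ι → ℂ} (hy : Function.Injective y)
    (h : cellType y = cellType w) {t : ℝ} (ht : t ∈ Icc 0 1) :
    Function.Injective (AffineMap.lineMap y w t : ι → ℂ) := by
  intro i j hij
  have lineMap_sub : AffineMap.lineMap (y i - y j) (w i - w j) t = (0 : ℂ) := by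
    rw [← sub_eq_zero, AffineMap.pi_lineMap_apply, AffineMap.pi_lineMap_apply] at hij
    rw [← hij]
    simp only [AffineMap.lineMap_apply_module]
    module
  have re_eq : (y i).re = (y j).re := by
    refine sub_eq_zero.1 (eq_zero_of_lineMap_eq_zero (b := (w i).re - (w j).re) ht ?_ ?_ ?_)
    · simpa using (cellType_eq_iff.1 h i j).1
    · simpa using (cellType_eq_iff.1 h j i).1
    · simpa [AffineMap.lineMap_apply_module] using congrArg re lineMap_sub
  have im_eq : (y i).im = (y j).im := by
    have re_eq' := (re_eq_re_iff_of_cellType_eq h i j).1 re_eq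
    refine sub_eq_zero.1 (eq_zero_of_lineMap_eq_zero (b := (w i).im - (w j).im) ht ?_ ?_ ?_)
    · simpa [re_eq, re_eq'] using (cellType_eq_iff.1 h i j).2
    · simpa [re_eq, re_eq'] using (cellType_eq_iff.1 h j i).2
    · simpa [AffineMap.lineMap_apply_module] using congrArg im lineMap_sub
  exact hy (Complex.ext re_eq im_eq)

lemma degenerates_of_cellType_eq {w x : ι → ℂ} (h : cellType x = cellType w) :
    Degenerates w x := fun i j =>
  ⟨(cellType_eq_iff.1 h i j).1.2, fun hre him =>
    (cellType_eq_iff.1 h i j).2.2 (fun _ => him) ((re_eq_re_iff_of_cellType_eq h i j).2 hre)⟩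

lemma isClosed_setOf_degenerates (w : ι → ℂ) : IsClosed {x | Degenerates w x} := by
  simp only [Degenerates, ofPred_forall, ofPred_and]
  refine isClosed_iInter fun i => isClosed_iInter fun j => .inter ?_ ?_
  · exact isClosed_iInter fun _ => isClosed_le (by fun_prop) (by fun_prop)
  · exact isClosed_iInter fun _ => isClosed_iInter fun _ => isClosed_le (by fun_prop) (by fun_prop)

lemma degenerates_of_mem_closure {Z : Type*} [TopologicalSpace Z] {Y : Z → ι → ℂ}
    (hY : Continuous Y) {w : ι → ℂ} {S : Set Z} (hS : ∀ z ∈ S, cellType (Y z) = cellType w) {z : Z}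
    (hz : z ∈ closure S) : Degenerates w (Y z) :=
  closure_minimal (fun y hy => degenerates_of_cellType_eq (hS y hy))
    ((isClosed_setOf_degenerates w).preimage hY) hz

lemma Degenerates.re_eq {w x : ι → ℂ} (h : Degenerates w x) {i j : ι}
    (hij : (w i).re = (w j).re) : (x i).re = (x j).re :=
  le_antisymm ((h i j).1 hij.le) ((h j i).1 hij.ge)

variable [Fintype ι]

/-- The number of vertical lines meeting the set of values of `y`. -/
noncomputable def numColumns (y : ι → ℂ) : ℕ :=
  (Finset.univ.image fun i => (y i).re).card

lemma numColumns_le_card (y : ι → ℂ) : numColumns y ≤ Fintype.card ι :=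
  Finset.card_image_le

namespace Degenerates

variable {w x : ι → ℂ} (h : Degenerates w x)
include h

lemma exists_factor : ∃ f : ℝ → ℝ, (∀ i, f (w i).re = (x i).re) ∧
    numColumns x = ((Finset.univ.image fun i => (w i).re).image f).card := by
  have hf := Function.FactorsThrough.extend_apply (g := fun i => (x i).re)
    (f := fun i => (w i).re) (fun i j hij => h.re_eq hij) 0
  refine ⟨_, hf, ?_⟩
  rw [Finset.image_image, numColumns]
  simp only [Function.comp_def, hf]

lemma numColumns_le : numColumns x ≤ numColumns w := by
  obtain ⟨f, -, hf⟩ := h.exists_factor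
  exact hf.trans_le Finset.card_image_le

lemma re_eq_re_iff (hc : numColumns x = numColumns w) (i j : ι) :
    (x i).re = (x j).re ↔ (w i).re = (w j).re := by
  refine ⟨fun hij => ?_, h.re_eq⟩
  obtain ⟨f, hf, hfc⟩ := h.exists_factor
  rw [hfc, numColumns, Finset.card_image_iff] at hc
  exact hc (by simp) (by simp) (by rwa [hf, hf])

lemma cellType_eq (hx : Function.Injective x) (hc : numColumns x = numColumns w) :
    cellType x = cellType w := by
  refine cellType_eq_iff.2 fun i j => ⟨⟨fun hre => ?_, (h i j).1⟩,
    imp_congr_ctx (h.re_eq_re_iff hc i j) fun hw => ⟨fun him => ?_, (h i j).2 hw⟩⟩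
  · rcases le_total (w i).re (w j).re with hle | hge
    · exact hle
    · exact ((h.re_eq_re_iff hc i j).1 (hre.antisymm ((h j i).1 hge))).le
  · rcases le_total (w i).im (w j).im with hle | hge
    · exact hle
    · exact (congrArg (im ∘ w) (hx (Complex.ext (h.re_eq hw)
        (him.antisymm ((h j i).2 hw.symm hge))))).le

end Degenerates

end Cells

section PlanarMotion

open Set Topology Complex

lemma isOpen_setOf_injective {ι E : Type*} [Finite ι] [TopologicalSpace E] [T2Space E] :
    IsOpen {f : ι → E | Function.Injective f} := by
  simp only [Function.Injective, ofPred_forall]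
  refine isOpen_iInter_of_finite fun i => isOpen_iInter_of_finite fun j => ?_
  by_cases hij : i = j
  · simp [hij]
  · simpa [hij] using isOpen_ne_fun (continuous_apply i) (continuous_apply j)

namespace Conf

variable {ι E Z : Type*} [TopologicalSpace E] [AddCommGroup E] [TopologicalSpace Z]

section StarNhd

variable [Module ℝ E]

/-- The configurations which can be moved to `b` along segments at constant speeds, without any
collisions. -/
def starNhd (b : Conf ι E) : Set (Conf ι E) :=
  {x | ∀ t : unitInterval, Function.Injective (AffineMap.lineMap x.1 b.1 (t : ℝ) : ι → E)}

variable [IsTopologicalAddGroup E] [ContinuousSMul ℝ E]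

lemma isOpen_starNhd [Finite ι] [T2Space E] (b : Conf ι E) : IsOpen (starNhd b) := by
  let K (p : unitInterval × Conf ι E) : ι → E := AffineMap.lineMap p.2.1 b.1 (p.1 : ℝ)
  have hK : Continuous K := by
    simp only [K, AffineMap.lineMap_apply_module]
    fun_prop
  have isClosed_image : IsClosed (Prod.snd '' (K ⁻¹' {f | Function.Injective f})ᶜ) :=
    isClosedMap_snd_of_compactSpace _ (isOpen_setOf_injective.preimage hK).isClosed_compl
  convert isClosed_image.isOpen_compl using 1
  ext x
  simp [starNhd, K]

lemma homotopic_const_of_forall_mem_starNhd {b : Conf ι E} {f : C(Z, Conf ι E)}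
    (h : ∀ z, f z ∈ starNhd b) : f.Homotopic (.const Z b) :=
  ⟨{toFun p := ⟨AffineMap.lineMap (f p.2).1 b.1 (p.1 : ℝ), h p.2 p.1⟩
    continuous_toFun := by
      simp only [AffineMap.lineMap_apply_module]
      fun_prop
    map_zero_left z := by simp
    map_one_left z := by simp}⟩

end StarNhd

/-- The segment from `x` to `y` may run into collisions, but the complex line through them does so
at countably many parameters only, and these can be avoided. -/
lemma joined [Countable ι] [Module ℂ E] [IsTopologicalAddGroup E] [ContinuousSMul ℂ E]
    (x y : Conf ι E) : Joined x y := by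
  let S : Set ℂ := {s | Function.Injective (AffineMap.lineMap x.1 y.1 s : ι → E)}
  have countable_compl : Sᶜ.Countable := by
    have subset : Sᶜ ⊆ ⋃ (i) (j) (_ : i ≠ j),
        {s | AffineMap.lineMap (x.1 i - x.1 j) (y.1 i - y.1 j) s = (0 : E)} := by
      intro s hs
      obtain ⟨i, j, h, hij⟩ := Function.not_injective_iff.1 hs
      refine mem_iUnion.2 ⟨i, mem_iUnion₂.2 ⟨j, hij, ?_⟩⟩
      rw [AffineMap.pi_lineMap_apply, AffineMap.pi_lineMap_apply, ← sub_eq_zero] at h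
      rw [mem_ofPred_eq, ← h]
      simp only [AffineMap.lineMap_apply_module]
      module
    refine .mono subset (countable_iUnion fun i => countable_iUnion fun j => countable_iUnion
      fun hij => Subsingleton.countable fun s hs t ht => ?_)
    have ne : x.1 i - x.1 j ≠ y.1 i - y.1 j := fun h => by
      simp [← h, sub_eq_zero, x.2.ne hij] at hs
    exact AffineMap.lineMap_injective ℂ ne (hs.trans ht.symm)
  have : PathConnectedSpace S := isPathConnected_iff_pathConnectedSpace.1 <| by
    simpa using countable_compl.isPathConnected_compl_of_one_lt_rank (by simp [rank_real_complex])
  let γ (s : S) : Conf ι E := ⟨AffineMap.lineMap x.1 y.1 s.1, s.2⟩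
  have hγ : Continuous γ := by
    simp only [γ, AffineMap.lineMap_apply_module]
    fun_prop
  convert (PathConnectedSpace.joined (⟨0, by simpa [S] using x.2⟩ : S)
    ⟨1, by simpa [S] using y.2⟩).map hγ using 1 <;> simp [γ]

end Conf

lemma homotopic_of_eq_cexp_mul {Z : Type*} [TopologicalSpace Z] {f g : C(Z, {z : ℂ // z ≠ 0})}
    (L : C(Z, ℂ)) (h : ∀ z, (g z : ℂ) = exp (L z) * f z) : f.Homotopic g :=
  ⟨{toFun p := ⟨exp ((p.1 : ℝ) * L p.2) * f p.2, mul_ne_zero (exp_ne_zero _) (f p.2).2⟩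
    continuous_toFun := by fun_prop
    map_zero_left z := by simp
    map_one_left z := by simp [← h]}⟩

lemma homotopic_of_mul_div_mem_slitPlane {Z : Type*} [TopologicalSpace Z]
    {f g : C(Z, {z : ℂ // z ≠ 0})} {c : ℂ} (hc : c ≠ 0)
    (h : ∀ z, c * (g z / f z) ∈ slitPlane) : f.Homotopic g := by
  have hf (z) : (f z : ℂ) ≠ 0 := (f z).2
  refine homotopic_of_eq_cexp_mul
    ⟨fun z => log (c * (g z / f z)) - log c, .sub (.clog (by fun_prop (disch := exact hf)) h)
      continuous_const⟩ fun z => ?_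
  change _ = exp (_ - _) * _
  rw [exp_sub, exp_log (slitPlane_ne_zero (h z)), exp_log hc,
    mul_div_cancel_left₀ _ hc, div_mul_cancel₀ _ (hf z)]

end PlanarMotion

namespace Conf

open Complex

variable {ι : Type*}

/-- The multiplication of a configuration by a nonzero scalar. -/
def scale : C({v : ℂ // v ≠ 0} × Conf ι ℂ, Conf ι ℂ) where
  toFun p := ⟨fun i => p.1 * p.2.1 i, fun _ _ h => p.2.2 (mul_left_cancel₀ p.1.2 h)⟩
  continuous_toFun := .subtype_mk (continuous_pi fun k =>
    .mul (by fun_prop) ((continuous_apply k).comp continuous_snd)) _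

variable {i j : ι} (hij : i ≠ j)

/-- The configuration rotated and rescaled so that the edge from `i` to `j` becomes `1`. -/
noncomputable def shape : C(Conf ι ℂ, Conf ι ℂ) where
  toFun x := ⟨fun k => x.1 k / edge hij x,
    fun _ _ h => x.2 ((div_left_inj' (edge hij x).2).1 h)⟩
  continuous_toFun := by fun_prop (disch := exact fun x => (edge hij x).2)

@[simp]
lemma scale_edge_shape (x : Conf ι ℂ) : scale (edge hij x, shape hij x) = x :=
  Subtype.ext (funext fun _ => mul_div_cancel₀ _ (edge hij x).2)

lemma shape_sub_shape (x : Conf ι ℂ) : (shape hij x).1 j - (shape hij x).1 i = 1 :=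
  (sub_div ..).symm.trans (div_self (edge hij x).2)

lemma two_le_numColumns_shape [Fintype ι] (x : Conf ι ℂ) : 2 ≤ numColumns (shape hij x).1 :=
  Finset.one_lt_card.2 ⟨((shape hij x).1 i).re, by simp, ((shape hij x).1 j).re, by simp,
    fun h => by simpa [h] using congrArg re (shape_sub_shape hij x)⟩

lemma homotopic_of_edge_of_shape {Z : Type*} [TopologicalSpace Z] {f g : C(Z, Conf ι ℂ)}
    (hedge : ((edge hij).comp f).Homotopic ((edge hij).comp g))
    (hshape : ((shape hij).comp f).Homotopic ((shape hij).comp g)) : f.Homotopic g := by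
  have scale_comp (f : C(Z, Conf ι ℂ)) :
      scale.comp (((edge hij).comp f).prodMk ((shape hij).comp f)) = f := by
    ext1 z
    exact scale_edge_shape hij (f z)
  rw [← scale_comp f, ← scale_comp g]
  exact .comp (.refl _) (hedge.prodMk hshape)

/-- The ratio of the edges from `i` to `j` of the two configurations. -/
noncomputable def edgeRatio : C(Conf ι ℂ × Conf ι ℂ, ℂ) where
  toFun p := edge hij p.2 / edge hij p.1
  continuous_toFun :=
    have continuous_edge := continuous_subtype_val.comp (edge hij (M := ℂ)).continuous
    (continuous_edge.comp continuous_snd).div (continuous_edge.comp continuous_fst)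
      fun p => (edge hij p.1).2

lemma edgeRatio_ne_zero (p : Conf ι ℂ × Conf ι ℂ) : edgeRatio hij p ≠ 0 :=
  div_ne_zero (edge hij p.2).2 (edge hij p.1).2

lemma hasMotionPlanningSection_of_forall_mem [Countable ι] (b b' : Conf ι ℂ) {c : ℂ} (hc : c ≠ 0)
    {V : Set (Conf ι ℂ × Conf ι ℂ)} (h : ∀ p ∈ V, shape hij p.1 ∈ starNhd b)
    (h' : ∀ p ∈ V, shape hij p.2 ∈ starNhd b') (hV : ∀ p ∈ V, c * edgeRatio hij p ∈ slitPlane) :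
    HasMotionPlanningSection (Conf ι ℂ) V := by
  obtain ⟨γ⟩ := joined b b'
  refine .of_homotopic (homotopic_of_edge_of_shape hij ?_ ?_)
  · exact homotopic_of_mul_div_mem_slitPlane hc fun p => hV p p.2
  · have to_b : ((shape hij).comp (ContinuousMap.fst.restrict V)).Homotopic (.const V b) :=
      homotopic_const_of_forall_mem_starNhd fun p => h p p.2
    have to_b' : ((shape hij).comp (ContinuousMap.snd.restrict V)).Homotopic (.const V b') :=
      homotopic_const_of_forall_mem_starNhd fun p => h' p p.2
    exact (to_b.trans ⟨γ.toHomotopyConst⟩).trans to_b'.symm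

/-- The edges from `i` to `j` of the two configurations point in opposite directions. -/
def AreOpposite (p : Conf ι ℂ × Conf ι ℂ) : Prop :=
  edgeRatio hij p ∉ slitPlane

lemma isClosed_setOf_areOpposite : IsClosed {p | AreOpposite hij p} :=
  (isOpen_slitPlane.preimage (edgeRatio hij).continuous).isClosed_compl

/-- The combinatorial type of a pair of configurations: the cells of their shapes, and whether
their edges point in opposite directions. -/
noncomputable def stratum (p : Conf ι ℂ × Conf ι ℂ) :
    (ι → ι → Prop × Prop) × (ι → ι → Prop × Prop) × Prop :=
  (cellType (shape hij p.1).1, cellType (shape hij p.2).1, AreOpposite hij p)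

variable {hij} in
lemma stratum_eq_iff {p q : Conf ι ℂ × Conf ι ℂ} :
    stratum hij p = stratum hij q ↔
      cellType (shape hij p.1).1 = cellType (shape hij q.1).1 ∧
      cellType (shape hij p.2).1 = cellType (shape hij q.2).1 ∧
      (AreOpposite hij p ↔ AreOpposite hij q) := by
  simp only [stratum, Prod.mk.injEq, eq_iff_iff]

lemma mem_starNhd_of_cellType_eq {x b : Conf ι ℂ} (h : cellType x.1 = cellType b.1) :
    x ∈ starNhd b :=
  fun t => injective_lineMap_of_cellType_eq x.2 h t.2

lemma exists_isOpen_stratum_subset [Finite ι] (p : Conf ι ℂ × Conf ι ℂ) :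
    ∃ V, IsOpen V ∧ stratum hij ⁻¹' {stratum hij p} ⊆ V ∧
      HasMotionPlanningSection (Conf ι ℂ) V := by
  obtain ⟨c, hc, hcV⟩ : ∃ c : ℂ, c ≠ 0 ∧
      ∀ q, (AreOpposite hij q ↔ AreOpposite hij p) → c * edgeRatio hij q ∈ slitPlane := by
    by_cases hp : AreOpposite hij p
    · refine ⟨-1, by simp, fun q hq => ?_⟩
      rw [neg_one_mul]
      exact (mem_slitPlane_or_neg_mem_slitPlane (edgeRatio_ne_zero hij q)).resolve_left (hq.2 hp)
    · refine ⟨1, one_ne_zero, fun q hq => ?_⟩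
      rw [one_mul]
      exact not_not.1 (mt hq.1 hp)
  refine ⟨{q | shape hij q.1 ∈ starNhd (shape hij p.1) ∧ shape hij q.2 ∈ starNhd (shape hij p.2) ∧
    c * edgeRatio hij q ∈ slitPlane}, ?_, fun q hq => ?_, ?_⟩
  · exact ((isOpen_starNhd _).preimage (by fun_prop)).inter
      (((isOpen_starNhd _).preimage (by fun_prop)).inter (isOpen_slitPlane.preimage (by fun_prop)))
  · obtain ⟨fst, snd, opp⟩ := stratum_eq_iff.1 hq
    exact ⟨mem_starNhd_of_cellType_eq fst, mem_starNhd_of_cellType_eq snd, hcV q opp⟩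
  · exact hasMotionPlanningSection_of_forall_mem hij _ _ hc (fun q hq => hq.1) (fun q hq => hq.2.1)
      fun q hq => hq.2.2

section StratumLevel

variable [Fintype ι]

open Classical in
/-- The codimension of the stratum of `p`. -/
noncomputable def stratumLevel (p : Conf ι ℂ × Conf ι ℂ) : ℕ :=
  (Fintype.card ι - numColumns (shape hij p.1).1) +
    (Fintype.card ι - numColumns (shape hij p.2).1) + if AreOpposite hij p then 1 else 0

lemma stratumLevel_lt (p : Conf ι ℂ × Conf ι ℂ) :
    stratumLevel hij p < 2 * Fintype.card ι - 2 := by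
  have fst := two_le_numColumns_shape hij p.1
  have snd := two_le_numColumns_shape hij p.2
  have card := fst.trans (numColumns_le_card _)
  unfold stratumLevel
  split_ifs <;> omega

lemma stratum_eq_of_mem_closure {p q : Conf ι ℂ × Conf ι ℂ}
    (hq : q ∈ closure (stratum hij ⁻¹' {stratum hij p}))
    (h : stratumLevel hij q = stratumLevel hij p) : stratum hij q = stratum hij p := by
  have of_mem (r) (hr : r ∈ stratum hij ⁻¹' {stratum hij p}) := stratum_eq_iff.1 hr
  have continuous_shape := continuous_subtype_val.comp (shape hij).continuous
  have fst : Degenerates (shape hij p.1).1 (shape hij q.1).1 :=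
    degenerates_of_mem_closure (continuous_shape.comp continuous_fst)
      (fun r hr => (of_mem r hr).1) hq
  have snd : Degenerates (shape hij p.2).1 (shape hij q.2).1 :=
    degenerates_of_mem_closure (continuous_shape.comp continuous_snd)
      (fun r hr => (of_mem r hr).2.1) hq
  have opp : AreOpposite hij p → AreOpposite hij q := fun hp =>
    closure_minimal (fun r hr => (of_mem r hr).2.2.2 hp) (isClosed_setOf_areOpposite hij) hq
  obtain ⟨fst_eq, snd_eq, opp_iff⟩ :
      numColumns (shape hij q.1).1 = numColumns (shape hij p.1).1 ∧
      numColumns (shape hij q.2).1 = numColumns (shape hij p.2).1 ∧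
      (AreOpposite hij q ↔ AreOpposite hij p) := by
    have fst_le := fst.numColumns_le
    have snd_le := snd.numColumns_le
    have fst_le_card := numColumns_le_card (shape hij p.1).1
    have snd_le_card := numColumns_le_card (shape hij p.2).1
    unfold stratumLevel at h
    split_ifs at h <;> grind
  exact stratum_eq_iff.2
    ⟨fst.cellType_eq (shape hij q.1).2 fst_eq, snd.cellType_eq (shape hij q.2).2 snd_eq, opp_iff⟩

end StratumLevel

end Conf

theorem hasTCCover_conf_complex {ι : Type*} [Fintype ι] [Nontrivial ι] :
    HasTCCover (Conf ι ℂ) (2 * Fintype.card ι - 2) := by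
  obtain ⟨i, j, hij⟩ := exists_pair_ne ι
  exact hasTCCover_of_stratification (Conf.stratum hij)
    (fun p => ⟨Conf.stratumLevel hij p, Conf.stratumLevel_lt hij p⟩)
    (fun _ _ hq h => Conf.stratum_eq_of_mem_closure hij hq (Fin.mk.inj h))
    (Conf.exists_isOpen_stratum_subset hij)

/-- the topological complexity of the configuration space of `n ≥ 2`
ordered distinct points in the plane equals `2n - 2`. -/
theorem tc_config_plane (n : ℕ) (hn : 2 ≤ n) :
    TopComplexity (ConfSpace n 2) = (2 * n - 2 : ℕ) := by
  obtain ⟨N, rfl⟩ := Nat.exists_eq_add_of_le' hn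
  have card : Fintype.card (Bool ⊕ Fin N) = N + 2 := by
    rw [Fintype.card_sum, Fintype.card_bool, Fintype.card_fin, add_comm]
  have two_mul_sub : 2 * (N + 2) - 2 = 2 * N + 1 + 1 := rfl
  let φ : ConfSpace (N + 2) 2 ≃ₜ Conf (Bool ⊕ Fin N) ℂ :=
    Conf.congr (Fintype.equivOfCardEq (by rw [card, Fintype.card_fin]))
      Complex.basisOneI.equivFunL.symm.toHomeomorph
  have upper : HasTCCover (Conf (Bool ⊕ Fin N) ℂ) (2 * (N + 2) - 2) :=
    by
    have : Nontrivial (Bool ⊕ Fin N) := Fintype.one_lt_card_iff_nontrivial.1 (by omega)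
    exact card ▸ hasTCCover_conf_complex
  rw [topComplexity_congr φ, two_mul_sub]
  exact topComplexity_eq_of_hasTCCover_of_not upper not_hasTCCover_conf_complex
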